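/- arXiv:math/0406441 — 3 statements merged into one kernel-verified Lean document; each statement's English description precedes it below -/
import Mathlib

section
/- Let μ be an infinite cardinal and suppose λ = sup_{i<θ} λ_i, where θ < λ and each λ_i ∈ MAD(μ). Then λ ∈ MAD(μ). (In other words, MAD(μ) is closed under singular suprema.) -/
/-!
Choose `i₀` with `#ι < lams i₀`, and a nontrivial mad family `ℬ` of size `lams i₀`. Any mad family
can be copied onto any set of size `μ`, so distinct members of `ℬ`, one for each `i : ι`, can be
split into mad families of size `lams i`. The split family is still mad: a set of size `μ` meets
some `B ∈ ℬ` in size `μ`, and inside `B` it meets some piece of `B` in size `μ`. Different members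
of `ℬ` share no piece, so the size of the split family is the sum of the numbers of pieces, and
since `#ℬ ≤ ⨆ i, lams i` this sum is the supremum.
-/

universe u
open Cardinal

/-- A family `𝒜` of subsets of `α` is `μ`-almost disjoint: its union has size `μ`,
each member has size `μ`, and distinct members intersect in a set of size `< μ`. -/
def IsADFamily (μ : Cardinal.{u}) {α : Type u} (𝒜 : Set (Set α)) : Prop :=
  #(⋃₀ 𝒜) = μ ∧ (∀ A ∈ 𝒜, #A = μ) ∧
    ∀ A ∈ 𝒜, ∀ B ∈ 𝒜, A ≠ B → #(↥(A ∩ B)) < μ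

/-- `𝒜` is maximal `μ`-almost disjoint: it is `μ`-ad and no new set `C ⊆ ⋃₀ 𝒜`
can be added keeping the family `μ`-almost disjoint. -/
def IsMadFamily (μ : Cardinal.{u}) {α : Type u} (𝒜 : Set (Set α)) : Prop :=
  IsADFamily μ 𝒜 ∧ ¬∃ C, C ⊆ ⋃₀ 𝒜 ∧ C ∉ 𝒜 ∧ IsADFamily μ (insert C 𝒜)

/-- `MADSet μ` is the set of cardinalities of nontrivial `μ`-mad families,
i.e. `μ`-mad families with at least `cf μ` members. -/
def MADSet (μ : Cardinal.{u}) : Set Cardinal.{u} :=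
  {c | ∃ 𝒜 : Set (Set μ.out), IsMadFamily μ 𝒜 ∧ μ.ord.cof ≤ #𝒜 ∧ #𝒜 = c}

open Set

variable {μ : Cardinal.{u}} {α : Type u}

lemma isMadFamily_iff {𝒜 : Set (Set α)} :
    IsMadFamily μ 𝒜 ↔
      IsADFamily μ 𝒜 ∧ ∀ C ⊆ ⋃₀ 𝒜, #C = μ → ∃ A ∈ 𝒜, μ ≤ #(C ∩ A : Set α) := by
  refine and_congr_right fun ⟨mk_union, mk_mem, mk_inter⟩ => ⟨fun hmax C hC hCμ => ?_, ?_⟩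
  · by_contra! hlt
    have hC_notMem : C ∉ 𝒜 := fun hCmem => by
      have hCC := hlt C hCmem
      rw [inter_self, hCμ] at hCC
      exact hCC.false
    refine hmax ⟨C, hC, hC_notMem, ?_, ?_, ?_⟩
    · rw [sUnion_insert, union_eq_right.2 hC, mk_union]
    · exact forall_mem_insert.2 ⟨hCμ, mk_mem⟩
    · rintro A (rfl | hA) B (rfl | hB) hAB
      · exact absurd rfl hAB
      · exact hlt B hB
      · exact inter_comm A B ▸ hlt A hA
      · exact mk_inter A hA B hB hAB
  · rintro hmeets ⟨C, hC, hC_notMem, -, mk_mem', mk_inter'⟩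
    obtain ⟨A, hA, hle⟩ := hmeets C hC (mk_mem' C (mem_insert C 𝒜))
    have hCA : C ≠ A := fun h => hC_notMem (h ▸ hA)
    exact hle.not_gt (mk_inter' C (mem_insert C 𝒜) A (mem_insert_of_mem C hA) hCA)

lemma IsMadFamily.nonempty {𝒜 : Set (Set α)} (h : IsMadFamily μ 𝒜) : 𝒜.Nonempty := by
  obtain ⟨⟨mk_union, -⟩, hmeets⟩ := isMadFamily_iff.1 h
  obtain ⟨A, hA, -⟩ := hmeets (⋃₀ 𝒜) Subset.rfl mk_union
  exact ⟨A, hA⟩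

lemma isMadFamily_singleton {S : Set α} (hS : #S = μ) : IsMadFamily μ {S} := by
  refine isMadFamily_iff.2 ⟨⟨by rw [sUnion_singleton, hS], ?_, ?_⟩, fun C hC hCμ => ?_⟩
  · rintro A rfl
    exact hS
  · rintro A rfl B rfl hAB
    exact absurd rfl hAB
  · rw [sUnion_singleton] at hC
    exact ⟨S, rfl, by rw [inter_eq_left.2 hC, hCμ]⟩

section Image

variable {β : Type u} {𝒜 : Set (Set α)} {f : α → β}

lemma IsADFamily.image (h : IsADFamily μ 𝒜) (hf : InjOn f (⋃₀ 𝒜)) :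
    IsADFamily μ (Set.image f '' 𝒜) := by
  obtain ⟨mk_union, mk_mem, mk_inter⟩ := h
  have hsub : ∀ A ∈ 𝒜, A ⊆ ⋃₀ 𝒜 := fun A hA => subset_sUnion_of_mem hA
  refine ⟨by rw [← image_sUnion, mk_image_eq_of_injOn f _ hf, mk_union], ?_, ?_⟩
  · rintro _ ⟨A, hA, rfl⟩
    rw [mk_image_eq_of_injOn f A (hf.mono (hsub A hA)), mk_mem A hA]
  · rintro _ ⟨A, hA, rfl⟩ _ ⟨B, hB, rfl⟩ hAB
    rw [← hf.image_inter (hsub A hA) (hsub B hB),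
      mk_image_eq_of_injOn f _ (hf.mono (inter_subset_left.trans (hsub A hA)))]
    exact mk_inter A hA B hB (ne_of_apply_ne (Set.image f) hAB)

lemma IsMadFamily.image (h : IsMadFamily μ 𝒜) (hf : InjOn f (⋃₀ 𝒜)) :
    IsMadFamily μ (Set.image f '' 𝒜) := by
  refine isMadFamily_iff.2 ⟨h.1.image hf, fun C' hC' hC'μ => ?_⟩
  obtain ⟨C, hC, rfl⟩ := subset_image_iff.1 (image_sUnion (f := f) ▸ hC')
  rw [mk_image_eq_of_injOn f C (hf.mono hC)] at hC'μ
  obtain ⟨A, hA, hle⟩ := (isMadFamily_iff.1 h).2 C hC hC'μ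
  refine ⟨f '' A, mem_image_of_mem _ hA, ?_⟩
  rwa [← hf.image_inter hC (subset_sUnion_of_mem hA),
    mk_image_eq_of_injOn f _ (hf.mono (inter_subset_left.trans hC))]

lemma mk_image_image_eq_of_injOn_sUnion (hf : InjOn f (⋃₀ 𝒜)) : #(Set.image f '' 𝒜) = #𝒜 :=
  mk_image_eq_of_injOn _ _ (hf.image.mono fun _ hA => subset_sUnion_of_mem hA)

end Image

lemma exists_bijOn_of_mk_eq {s t : Set α} (h : #s = #t) : ∃ f : α → α, BijOn f s t := by
  obtain ⟨e⟩ := Cardinal.eq.1 h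
  let f : α → α := Function.extend Subtype.val (Subtype.val ∘ e) id
  have hf (x : s) : f x = e x := Subtype.val_injective.extend_apply _ _ x
  refine ⟨f, fun x hx => ?_, fun x hx y hy hxy => ?_, fun y hy => ?_⟩
  · exact hf ⟨x, hx⟩ ▸ (e ⟨x, hx⟩).2
  · rw [hf ⟨x, hx⟩, hf ⟨y, hy⟩] at hxy
    exact congrArg Subtype.val (e.injective (Subtype.ext hxy))
  · exact ⟨e.symm ⟨y, hy⟩, (e.symm ⟨y, hy⟩).2, by rw [hf, e.apply_symm_apply]⟩

lemma IsMadFamily.exists_sUnion_eq {𝒜 : Set (Set α)} (h : IsMadFamily μ 𝒜) {S : Set α}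
    (hS : #S = μ) : ∃ 𝒟 : Set (Set α), IsMadFamily μ 𝒟 ∧ ⋃₀ 𝒟 = S ∧ #𝒟 = #𝒜 := by
  obtain ⟨f, hf⟩ := exists_bijOn_of_mk_eq (h.1.1.trans hS.symm)
  exact ⟨Set.image f '' 𝒜, h.image hf.injOn, by rw [← image_sUnion, hf.image_eq],
    mk_image_image_eq_of_injOn_sUnion hf.injOn⟩

section Refinement

variable {ℬ : Set (Set α)} {𝒟 : ℬ → Set (Set α)}

lemma IsADFamily.iUnion (hℬ : IsADFamily μ ℬ) (h𝒟 : ∀ B, IsADFamily μ (𝒟 B))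
    (hU : ∀ B, ⋃₀ 𝒟 B = B) : IsADFamily μ (⋃ B, 𝒟 B) := by
  obtain ⟨mk_union, -, mk_inter⟩ := hℬ
  have hsub : ∀ B, ∀ A ∈ 𝒟 B, A ⊆ B := fun B A hA => (subset_sUnion_of_mem hA).trans (hU B).subset
  refine ⟨?_, fun A hA => ?_, fun A hA A' hA' hAA' => ?_⟩
  · rw [sUnion_iUnion, iUnion_congr hU, ← sUnion_eq_iUnion, mk_union]
  · obtain ⟨B, hAB⟩ := mem_iUnion.1 hA
    exact (h𝒟 B).2.1 A hAB
  · obtain ⟨B, hAB⟩ := mem_iUnion.1 hA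
    obtain ⟨B', hAB'⟩ := mem_iUnion.1 hA'
    obtain rfl | hBB' := eq_or_ne B B'
    · exact (h𝒟 B).2.2 A hAB A' hAB' hAA'
    · calc #(A ∩ A' : Set α)
          ≤ #(B ∩ B' : Set α) :=
            mk_le_mk_of_subset (inter_subset_inter (hsub B A hAB) (hsub B' A' hAB'))
        _ < μ := mk_inter B B.2 B' B'.2 (Subtype.coe_ne_coe.2 hBB')

lemma IsMadFamily.iUnion (hℬ : IsMadFamily μ ℬ) (h𝒟 : ∀ B, IsMadFamily μ (𝒟 B))
    (hU : ∀ B, ⋃₀ 𝒟 B = B) : IsMadFamily μ (⋃ B, 𝒟 B) := by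
  refine isMadFamily_iff.2 ⟨hℬ.1.iUnion (fun B => (h𝒟 B).1) hU, fun C hC hCμ => ?_⟩
  rw [sUnion_iUnion, iUnion_congr hU, ← sUnion_eq_iUnion] at hC
  obtain ⟨B, hB, hle⟩ := (isMadFamily_iff.1 hℬ).2 C hC hCμ
  have hCB : #(C ∩ B : Set α) = μ := le_antisymm (hCμ ▸ mk_le_mk_of_subset inter_subset_left) hle
  obtain ⟨A, hA, hle'⟩ := (isMadFamily_iff.1 (h𝒟 ⟨B, hB⟩)).2 (C ∩ B)
    (inter_subset_right.trans (hU ⟨B, hB⟩).superset) hCB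
  exact ⟨A, mem_iUnion.2 ⟨_, hA⟩,
    hle'.trans (mk_le_mk_of_subset (inter_subset_inter_left A inter_subset_left))⟩

lemma IsADFamily.pairwise_disjoint_of_sUnion_eq (hℬ : IsADFamily μ ℬ)
    (h𝒟 : ∀ B, IsADFamily μ (𝒟 B)) (hU : ∀ B, ⋃₀ 𝒟 B = B) :
    Pairwise (Function.onFun Disjoint 𝒟) := by
  intro B B' hBB'
  refine disjoint_left.2 fun A hA hA' => ?_
  have hAB : A ⊆ B := (subset_sUnion_of_mem hA).trans (hU B).subset
  have hAB' : A ⊆ B' := (subset_sUnion_of_mem hA').trans (hU B').subset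
  refine lt_irrefl μ ?_
  calc μ = #A := ((h𝒟 B).2.1 A hA).symm
    _ ≤ #(B ∩ B' : Set α) := mk_le_mk_of_subset (subset_inter hAB hAB')
    _ < μ := hℬ.2.2 B B.2 B' B'.2 (Subtype.coe_ne_coe.2 hBB')

lemma IsMadFamily.exists_mk_eq_sum (hℬ : IsMadFamily μ ℬ) (h𝒟 : ∀ B, IsMadFamily μ (𝒟 B)) :
    ∃ 𝒜 : Set (Set α), IsMadFamily μ 𝒜 ∧ #𝒜 = sum fun B => #(𝒟 B) := by
  choose 𝒞 h𝒞 hU h𝒞𝒟 using fun B : ℬ => (h𝒟 B).exists_sUnion_eq (hℬ.1.2.1 B B.2)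
  have hdisj := hℬ.1.pairwise_disjoint_of_sUnion_eq (fun B => (h𝒞 B).1) hU
  exact ⟨⋃ B, 𝒞 B, hℬ.iUnion h𝒞 hU, by simp only [mk_iUnion_eq_sum_mk hdisj, h𝒞𝒟]⟩

end Refinement

lemma aleph0_le_of_mem_MADSet (hμ : ℵ₀ ≤ μ) {c : Cardinal.{u}} (hc : c ∈ MADSet μ) : ℵ₀ ≤ c := by
  obtain ⟨𝒜, -, hcof, rfl⟩ := hc
  exact (Ordinal.aleph0_le_cof_iff.2 (Ordinal.one_lt_cof_iff.2 (isSuccLimit_ord hμ))).trans hcof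

theorem sum_mem_MADSet {ι : Type u} {c : ι → Cardinal.{u}} (hι : #ι ∈ MADSet μ)
    (hc : ∀ i, c i = 1 ∨ c i ∈ MADSet μ) : sum c ∈ MADSet μ := by
  obtain ⟨ℬ, hℬ, hcof, hℬι⟩ := hι
  obtain ⟨e⟩ := Cardinal.eq.1 hℬι
  have hmad (i : ι) : ∃ 𝒟 : Set (Set μ.out), IsMadFamily μ 𝒟 ∧ #𝒟 = c i := by
    obtain hi | ⟨𝒟, h𝒟, -, h𝒟c⟩ := hc i
    · exact ⟨{Set.univ}, isMadFamily_singleton (by rw [mk_univ, mk_out]), by rw [mk_singleton, hi]⟩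
    · exact ⟨𝒟, h𝒟, h𝒟c⟩
  choose 𝒟 h𝒟 h𝒟c using hmad
  have hone (i : ι) : 1 ≤ c i := h𝒟c i ▸ Cardinal.one_le_iff_ne_zero.2
    (mk_ne_zero_iff.2 (h𝒟 i).nonempty.to_subtype)
  obtain ⟨𝒜, h𝒜, h𝒜sum⟩ := hℬ.exists_mk_eq_sum fun B => h𝒟 (e B)
  have h𝒜c : #𝒜 = sum c := by
    simp only [h𝒜sum, h𝒟c]
    exact mk_congr (e.sigmaCongrLeft (β := fun i => (c i).out))
  refine ⟨𝒜, h𝒜, ?_, h𝒜c⟩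
  calc μ.ord.cof ≤ #ι := hcof.trans hℬι.le
    _ = sum fun _ : ι => 1 := by rw [sum_const', mul_one]
    _ ≤ sum c := sum_le_sum _ _ hone
    _ = #𝒜 := h𝒜c.symm

lemma sum_extend_one_eq_iSup {ι κ : Type u} {f : ι → κ} (hf : f.Injective)
    {c : ι → Cardinal.{u}} (hκ : #κ ≤ ⨆ i, c i) (hc : ℵ₀ ≤ ⨆ i, c i) :
    sum (Function.extend f c 1) = ⨆ i, c i := by
  refine le_antisymm ?_ (ciSup_le' fun i => ?_)
  · have hle (k : κ) : Function.extend f c 1 k ≤ ⨆ i, c i := by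
      by_cases hk : ∃ i, f i = k
      · obtain ⟨i, rfl⟩ := hk
        exact hf.extend_apply c _ i ▸ le_ciSup bddAbove_of_small i
      · rw [Function.extend_apply' c _ k hk]
        exact one_le_aleph0.trans hc
    calc sum (Function.extend f c 1)
        ≤ #κ * ⨆ k, Function.extend f c 1 k := sum_le_mk_mul_iSup _
      _ ≤ (⨆ i, c i) * ⨆ i, c i := mul_le_mul' hκ (ciSup_le' hle)
      _ = ⨆ i, c i := mul_eq_self hc
  · exact hf.extend_apply c _ i ▸ le_sum (Function.extend f c 1) (f i)

/-- MAD(μ) is closed under singular suprema: if lam = sup_{i<θ} lam_i with θ < lam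
and each lam_i ∈ MAD(μ), then lam ∈ MAD(μ). -/
theorem stmt3 (μ : Cardinal.{u}) (hμ : ℵ₀ ≤ μ) {ι : Type u} (lam : Cardinal.{u})
    (lams : ι → Cardinal.{u}) (hθ : #ι < lam) (hmem : ∀ i, lams i ∈ MADSet μ)
    (hsup : lam = ⨆ i, lams i) : lam ∈ MADSet μ := by
  subst hsup
  obtain ⟨i₀, hi₀⟩ := exists_lt_of_lt_ciSup' hθ
  have hle : lams i₀ ≤ ⨆ i, lams i := le_ciSup bddAbove_of_small i₀
  have hω : ℵ₀ ≤ ⨆ i, lams i := (aleph0_le_of_mem_MADSet hμ (hmem i₀)).trans hle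
  obtain ⟨f⟩ : Nonempty (ι ↪ (lams i₀).out) := by rw [← le_def, mk_out]; exact hi₀.le
  rw [← sum_extend_one_eq_iSup f.injective ((mk_out _).trans_le hle) hω]
  refine sum_mem_MADSet (by rw [mk_out]; exact hmem i₀) fun k => ?_
  by_cases hk : ∃ i, f i = k
  · obtain ⟨i, rfl⟩ := hk
    exact .inr (f.injective.extend_apply lams _ i ▸ hmem i)
  · exact .inl (Function.extend_apply' lams _ k hk)
end

section
/- Let μ be a singular cardinal of countable cofinality with μ < 𝔟 (the bounding number of (ω^ω, ≤*)). Then μ ∉ MAD(μ). (In particular, Martin's Axiom together with 2^{ℵ₀} > μ implies μ ∉ MAD(μ).) -/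
/-!
Let `𝒜` be an infinite `μ`-almost disjoint family with `#𝒜 ≤ μ` and `#𝒜 < 𝔟`. As `cf μ = ω`, fix
cardinals `c 0 ≤ c 1 ≤ …` with supremum `μ`, sets `S n ⊆ 𝒜` of size at most `c n` such that each
member of `𝒜` is eventually in `S n`, and distinct members `a 0, a 1, …` of `𝒜`. As `#𝒜 < 𝔟`, a
single `g : ℕ → ℕ` satisfies `#(A ∩ a n) ≤ c (g n)` for every `A ∈ 𝒜` and almost all `n`.

For each `n`, the traces on `a n` of those `A ∈ S n` with `#(A ∩ a n) ≤ c (g n)` cover at most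
`c n * c (g n) < μ` points, so `a n` has a subset `C n` of size `c n` avoiding all of them. Then
`⋃ n, C n` has size `μ`, while every `A ∈ 𝒜` is disjoint from almost all `C n` and so meets the
union in fewer than `μ` points. Hence `𝒜` is not maximal.
-/

universe u
open Cardinal

/-- The bounding number 𝔟 of (ω^ω, ≤*). -/
noncomputable def bOmega : Cardinal.{0} :=
  sInf {c | ∃ F : Set (ℕ → ℕ), #F = c ∧ ¬∃ g : ℕ → ℕ, ∀ f ∈ F, {n | g n < f n}.Finite}

open Filter

section Domination

lemma exists_eventually_le_of_lt_bOmega {ι : Type u} (hι : #ι < lift.{u} bOmega)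
    (f : ι → ℕ → ℕ) : ∃ g : ℕ → ℕ, ∀ i, ∀ᶠ n in atTop, f i n ≤ g n := by
  have hrange : #(Set.range f) < bOmega := by
    rw [← lift_lt.{0, u}]
    exact mk_range_le_lift.trans_lt (by rwa [lift_id'.{0, u}])
  have hbdd : ∃ g : ℕ → ℕ, ∀ h ∈ Set.range f, {n | g n < h n}.Finite := by
    by_contra hunbdd
    exact notMem_of_lt_csInf' hrange ⟨_, rfl, hunbdd⟩
  obtain ⟨g, hg⟩ := hbdd
  refine ⟨g, fun i ↦ ?_⟩
  rw [← Nat.cofinite_eq_atTop]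
  simpa [eventually_cofinite] using hg (f i) ⟨i, rfl⟩

lemma exists_eventually_le_comp_of_lt_bOmega {ι : Type u} (hι : #ι < lift.{u} bOmega)
    {β : Type*} [Preorder β] {c : ℕ → β} (hc : Monotone c) {d : ι → ℕ → β}
    (hd : ∀ i, ∀ᶠ n in atTop, ∃ k, d i n ≤ c k) :
    ∃ g : ℕ → ℕ, ∀ i, ∀ᶠ n in atTop, d i n ≤ c (g n) := by
  have hf (i : ι) (n : ℕ) (h : ∃ k, d i n ≤ c k) : ∃ k, d i n ≤ c k := h
  choose! f hf using hf
  obtain ⟨g, hg⟩ := exists_eventually_le_of_lt_bOmega hι f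
  refine ⟨g, fun i ↦ ?_⟩
  filter_upwards [hd i, hg i] with n hdn hgn
  exact (hf i n hdn).trans (hc hgn)

end Domination

section CountableCofinality

variable {μ : Cardinal.{u}}

lemma aleph0_le_of_cof_ord_eq_aleph0 (hcof : μ.ord.cof = ℵ₀) : ℵ₀ ≤ μ :=
  hcof.symm.trans_le (Ordinal.cof_ord_le μ)

lemma isSuccLimit_of_cof_ord_eq_aleph0 (hcof : μ.ord.cof = ℵ₀) : Order.IsSuccLimit μ := by
  obtain rfl | hμ := (aleph0_le_of_cof_ord_eq_aleph0 hcof).eq_or_lt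
  · exact isSuccLimit_aleph0
  · exact IsSingular.isSuccLimit ⟨hμ.le, (hcof.trans_lt hμ).ne⟩

lemma exists_monotone_isLUB_of_cof_ord_eq_aleph0 (hcof : μ.ord.cof = ℵ₀) :
    ∃ c : ℕ → Cardinal.{u}, Monotone c ∧ (∀ n, c n < μ) ∧ IsLUB (Set.range c) μ := by
  obtain ⟨f, hf⟩ := Ordinal.exists_isFundamentalSeq (o := μ.ord) (a := Ordinal.omega0)
    (by rw [hcof, ord_aleph0])
  let c (n : ℕ) : Cardinal.{u} := (f ⟨n, Ordinal.natCast_lt_omega0 n⟩).1.card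
  have hcμ (n : ℕ) : c n < μ := lt_ord.1 (f _).2
  refine ⟨c, fun m n h ↦ ?_, hcμ, ?_, fun x hx ↦ ?_⟩
  · exact Ordinal.card_le_card (hf.strictMono.monotone (Subtype.mk_le_mk.2 (Nat.cast_le.2 h)))
  · rintro _ ⟨n, rfl⟩
    exact (hcμ n).le
  · by_contra! hxμ
    have hsucc : (Order.succ x).ord < μ.ord :=
      ord_lt_ord.2 ((isSuccLimit_of_cof_ord_eq_aleph0 hcof).succ_lt hxμ)
    obtain ⟨_, ⟨⟨a, ha⟩, rfl⟩, hle⟩ := hf.isCofinal_range ⟨_, hsucc⟩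
    obtain ⟨n, rfl⟩ := Ordinal.lt_omega0.1 ha
    have hxc : Order.succ x ≤ c n := ord_le.1 hle
    exact (Order.succ_le_iff.1 hxc).not_ge (hx ⟨n, rfl⟩)

lemma exists_filtration_of_isLUB {ι : Type u} (hι : #ι ≤ μ) {c : ℕ → Cardinal.{u}}
    (hc : Monotone c) (hlub : IsLUB (Set.range c) μ) :
    ∃ S : ℕ → Set ι, (∀ n, #(S n) ≤ c n) ∧ ∀ i, ∀ᶠ n in atTop, i ∈ S n := by
  obtain ⟨φ⟩ : Nonempty (ι ↪ μ.ord.ToType) := by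
    rwa [← Cardinal.le_def, mk_ord_toType]
  let rank (i : ι) : Ordinal.{u} := (φ i).toOrd
  have hrank : Function.Injective rank :=
    Subtype.val_injective.comp (Ordinal.ToType.mk.symm.injective.comp φ.injective)
  refine ⟨fun n ↦ rank ⁻¹' Set.Iio (c n).ord, fun n ↦ ?_, fun i ↦ ?_⟩
  · simpa [mk_Iio_ordinal] using mk_preimage_of_injective_lift rank (Set.Iio (c n).ord) hrank
  · obtain ⟨_, ⟨N, rfl⟩, hN⟩ := (lt_isLUB_iff hlub).1 (lt_ord.1 (Set.mem_Iio.1 (φ i).toOrd.2))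
    filter_upwards [eventually_ge_atTop N] with n hn
    exact lt_ord.2 (hN.trans_le (hc hn))

end CountableCofinality

section SmallTraces

variable {μ : Cardinal.{u}} {α : Type u}

lemma exists_subset_mk_eq_forall_disjoint (hμ : ℵ₀ ≤ μ) {s : Set α} (hs : μ ≤ #s)
    {ι : Type u} {B : ι → Set α} {I : Set ι} (hI : #I < μ) {κ ν : Cardinal.{u}} (hκ : κ < μ)
    (hB : ∀ i ∈ I, #(↥(B i ∩ s)) ≤ κ) (hν : ν < μ) :
    ∃ C ⊆ s, #C = ν ∧ ∀ i ∈ I, Disjoint (B i) C := by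
  let R : Set α := ⋃ i ∈ I, B i ∩ s
  have hR : #R < μ := (mk_biUnion_le _ _).trans_lt <|
    mul_lt_of_lt hμ hI <| (ciSup_le' fun i : I ↦ hB i i.2).trans_lt hκ
  have hdiff : ν ≤ #(↥(s \ R)) := by
    by_contra! hlt
    exact (add_lt_of_lt hμ (hlt.trans hν) hR).not_ge (hs.trans (le_mk_sdiff_add_mk s R))
  obtain ⟨C, hCsub, hC⟩ := le_mk_iff_exists_subset.1 hdiff
  refine ⟨C, hCsub.trans Set.sdiff_subset, hC, fun i hi ↦ Set.disjoint_left.2 fun x hxB hxC ↦ ?_⟩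
  exact (hCsub hxC).2 (Set.mem_biUnion hi ⟨hxB, (hCsub hxC).1⟩)

lemma mk_biUnion_lt_of_forall_lt (hμ : ℵ₀ ≤ μ) {C : ℕ → Set α} (hC : ∀ n, #(C n) < μ) (N : ℕ) :
    #(↥(⋃ n < N, C n)) < μ := by
  induction N with
  | zero => simpa using aleph0_pos.trans_le hμ
  | succ N ih =>
    rw [Set.biUnion_lt_succ]
    exact (mk_union_le _ _).trans_lt (add_lt_of_lt hμ ih (hC N))

lemma mk_inter_iUnion_lt_of_eventually_disjoint (hμ : ℵ₀ ≤ μ) {A : Set α} {C : ℕ → Set α}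
    (hC : ∀ n, #(C n) < μ) (hA : ∀ᶠ n in atTop, Disjoint A (C n)) :
    #(↥(A ∩ ⋃ n, C n)) < μ := by
  obtain ⟨N, hN⟩ := eventually_atTop.1 hA
  have hsub : A ∩ ⋃ n, C n ⊆ ⋃ n < N, C n := by
    rintro x ⟨hxA, hx⟩
    obtain ⟨n, hxn⟩ := Set.mem_iUnion.1 hx
    have hnN : n < N := lt_of_not_ge fun h ↦ Set.disjoint_left.1 (hN n h) hxA hxn
    exact Set.mem_biUnion hnN hxn
  exact (mk_le_mk_of_subset hsub).trans_lt (mk_biUnion_lt_of_forall_lt hμ hC N)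

theorem exists_subset_iUnion_forall_mk_inter_lt (hcof : μ.ord.cof = ℵ₀) {ι : Type u}
    (hι : #ι ≤ μ) (hb : #ι < lift.{u} bOmega) {a : ℕ → Set α} (ha : ∀ n, μ ≤ #(a n))
    {B : ι → Set α} (hB : ∀ i, ∀ᶠ n in atTop, #(↥(B i ∩ a n)) < μ) :
    ∃ C ⊆ ⋃ n, a n, μ ≤ #C ∧ ∀ i, #(↥(B i ∩ C)) < μ := by
  have hμ := aleph0_le_of_cof_ord_eq_aleph0 hcof
  obtain ⟨c, hc, hcμ, hlub⟩ := exists_monotone_isLUB_of_cof_ord_eq_aleph0 hcof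
  obtain ⟨S, hScard, hS⟩ := exists_filtration_of_isLUB hι hc hlub
  obtain ⟨g, hg⟩ : ∃ g : ℕ → ℕ, ∀ i, ∀ᶠ n in atTop, #(↥(B i ∩ a n)) ≤ c (g n) := by
    refine exists_eventually_le_comp_of_lt_bOmega hb hc fun i ↦ (hB i).mono fun n hn ↦ ?_
    obtain ⟨_, ⟨k, rfl⟩, hk⟩ := (lt_isLUB_iff hlub).1 hn
    exact ⟨k, hk.le⟩
  have hC (n : ℕ) : ∃ C ⊆ a n, #C = c n ∧
      ∀ i ∈ S n ∩ {i | #(↥(B i ∩ a n)) ≤ c (g n)}, Disjoint (B i) C :=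
    have hI : #(↥(S n ∩ {i | #(↥(B i ∩ a n)) ≤ c (g n)})) < μ :=
      ((mk_le_mk_of_subset Set.inter_subset_left).trans (hScard n)).trans_lt (hcμ n)
    exists_subset_mk_eq_forall_disjoint hμ (ha n) hI (hcμ (g n)) (fun _ hi ↦ hi.2) (hcμ n)
  choose C hCsub hCcard hCdisj using hC
  refine ⟨⋃ n, C n, Set.iUnion_mono hCsub, hlub.2 ?_, fun i ↦ ?_⟩
  · rintro _ ⟨n, rfl⟩
    exact (hCcard n).ge.trans (mk_le_mk_of_subset (Set.subset_iUnion C n))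
  · refine mk_inter_iUnion_lt_of_eventually_disjoint hμ (fun n ↦ (hCcard n).trans_lt (hcμ n)) ?_
    filter_upwards [hS i, hg i] with n hSn hgn
    exact hCdisj n i ⟨hSn, hgn⟩

end SmallTraces

section AlmostDisjoint

variable {μ : Cardinal.{u}} {α : Type u} {𝒜 : Set (Set α)}

lemma IsADFamily.insert (h𝒜 : IsADFamily μ 𝒜) {C : Set α} (hCU : C ⊆ ⋃₀ 𝒜) (hC : #C = μ)
    (hCA : ∀ A ∈ 𝒜, #(↥(A ∩ C)) < μ) : IsADFamily μ (insert C 𝒜) := by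
  obtain ⟨hU, hcard, hinter⟩ := h𝒜
  refine ⟨?_, ?_, ?_⟩
  · rwa [Set.sUnion_insert, Set.union_eq_self_of_subset_left hCU]
  · exact Set.forall_mem_insert.2 ⟨hC, hcard⟩
  · rintro A (rfl | hA) B (rfl | hB) hne
    · exact absurd rfl hne
    · rw [Set.inter_comm]
      exact hCA B hB
    · exact hCA A hA
    · exact hinter A hA B hB hne

lemma IsMadFamily.exists_le_mk_inter (h𝒜 : IsMadFamily μ 𝒜) {C : Set α} (hCU : C ⊆ ⋃₀ 𝒜)
    (hC : μ ≤ #C) : ∃ A ∈ 𝒜, μ ≤ #(↥(A ∩ C)) := by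
  by_contra! hCA
  have hCμ : #C = μ := ((mk_le_mk_of_subset hCU).trans h𝒜.1.1.le).antisymm hC
  refine h𝒜.2 ⟨C, hCU, fun hmem ↦ ?_, h𝒜.1.insert hCU hCμ hCA⟩
  exact (hCA C hmem).ne (by rw [Set.inter_self, hCμ])

lemma IsADFamily.exists_subset_forall_mk_inter_lt (h𝒜 : IsADFamily μ 𝒜) (hcof : μ.ord.cof = ℵ₀)
    (hinf : 𝒜.Infinite) (hle : #𝒜 ≤ μ) (hb : #𝒜 < lift.{u} bOmega) :
    ∃ C ⊆ ⋃₀ 𝒜, μ ≤ #C ∧ ∀ A ∈ 𝒜, #(↥(A ∩ C)) < μ := by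
  obtain ⟨-, hcard, hinter⟩ := h𝒜
  let a : ℕ ↪ 𝒜 := hinf.natEmbedding
  have haA (A : 𝒜) : ∀ᶠ n in atTop, #(↥(A.1 ∩ (a n).1)) < μ := by
    have hne : ∀ᶠ n in atTop, a n ≠ A := by
      rw [← Nat.cofinite_eq_atTop]
      exact a.injective.tendsto_cofinite.eventually (eventually_cofinite_ne A)
    filter_upwards [hne] with n hn
    exact hinter A A.2 (a n) (a n).2 fun h ↦ hn (Subtype.ext h.symm)
  obtain ⟨C, hCsub, hC, hCA⟩ := exists_subset_iUnion_forall_mk_inter_lt hcof hle hb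
    (fun n ↦ (hcard (a n) (a n).2).ge) haA
  have haU : ⋃ n, (a n).1 ⊆ ⋃₀ 𝒜 := Set.iUnion_subset fun n ↦ Set.subset_sUnion_of_mem (a n).2
  exact ⟨C, hCsub.trans haU, hC, fun A hA ↦ hCA ⟨A, hA⟩⟩

end AlmostDisjoint

theorem stmt9_general {μ κ : Cardinal.{u}} (hcof : μ.ord.cof = ℵ₀) (hκ : κ ∈ MADSet μ)
    (hb : κ < lift.{u} bOmega) : μ < κ := by
  obtain ⟨𝒜, hmad, hnontriv, rfl⟩ := hκ
  by_contra! hle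
  have hinf : 𝒜.Infinite := by
    rwa [hcof, ← infinite_iff, Set.infinite_coe_iff] at hnontriv
  obtain ⟨C, hCU, hC, hCA⟩ := hmad.1.exists_subset_forall_mk_inter_lt hcof hinf hle hb
  obtain ⟨A, hA, hAC⟩ := hmad.exists_le_mk_inter hCU hC
  exact (hCA A hA).not_ge hAC

/-- If μ is singular of countable cofinality and μ < 𝔟, then μ ∉ MAD(μ). -/
theorem stmt9 (μ : Cardinal.{0}) (hμ : ℵ₀ < μ) (hcof : μ.ord.cof = ℵ₀)
    (hb : μ < bOmega) : μ ∉ MADSet μ :=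
  fun h ↦ (stmt9_general hcof h (by rwa [lift_id])).false
end

section
/- Let μ be a singular cardinal. If 2^{cf(μ)} < μ, then μ ∈ MAD(μ); that is, there exists a nontrivial μ-mad family of cardinality μ. -/
/-!
Let `κ = cf μ`. Cut the ground set into `μ` columns `{x | a x = α}` of size `μ`, where `α` runs over
a well-order with a top element, and cut every proper initial segment of the columns into `κ` pieces
of size `< μ` by means of a second coordinate `ρ`.

Let `C` be a set of size `μ` that is almost disjoint from all columns, and let `d` be least such
that `C` has `μ` points in the columns before `d`. The number of points of `C` in the columns up to
`α` then increases to `μ` as `α` increases to `d`; comparing it with a sequence of length `κ`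
cofinal in `μ` gives a map `i` from the columns before `d` to `κ`, and `x ↦ (i (a x), ρ x)` codes
the points before `d` by `κ × κ`, with fibers of size `< μ`. Take a maximal `κ`-almost disjoint
family of subsets of `κ × κ` that are almost disjoint from the codes of the segments before `d`. It
pulls back to a family on the columns before `d` that is mad among the sets orthogonal to these
segments: a set of size `μ` has `κ` fibers such that any `κ` of them account for `μ` of its points.

The pulled back family has at most `2 ^ κ < μ` members, so that the columns together with one such
family for every `d` form a mad family of size `μ`.
-/

universe u
open Cardinal

open Set

/-! ### Cardinalities of unions -/

section Unions

variable {X P : Type u} {μ : Cardinal.{u}}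

theorem mk_iUnion_lt_of_forall_le {ι : Type u} {ν : Cardinal.{u}} (hμ : ℵ₀ ≤ μ) (hι : #ι < μ)
    (hν : ν < μ) {F : ι → Set X} (hF : ∀ i, #(F i) ≤ ν) : #(⋃ i, F i) < μ :=
  (mk_iUnion_le F).trans_lt <| mul_lt_of_lt hμ hι ((ciSup_le' hF).trans_lt hν)

theorem mk_iUnion_lt_of_lt_cof {ι : Type u} (hμ : ℵ₀ ≤ μ) (hι : #ι < μ.ord.cof)
    {F : ι → Set X} (hF : ∀ i, #(F i) < μ) : #(⋃ i, F i) < μ :=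
  (mk_iUnion_le F).trans_lt <| mul_lt_of_lt hμ (hι.trans_le (Ordinal.cof_ord_le μ))
    (iSup_lt_of_lt_cof_ord hι hF)

theorem mk_inter_preimage_lt_of_lt_cof (hμ : ℵ₀ ≤ μ) {c : X → P} {Y : Set X}
    (hfib : ∀ p, #(Y ∩ c ⁻¹' {p} : Set X) < μ) {T : Set P} (hT : #T < μ.ord.cof) :
    #(Y ∩ c ⁻¹' T : Set X) < μ := by
  refine (mk_le_mk_of_subset fun x hx => ?_).trans_lt
    (mk_iUnion_lt_of_lt_cof hμ hT fun p : T => hfib p)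
  exact mem_iUnion.2 ⟨⟨c x, hx.2⟩, hx.1, rfl⟩

theorem exists_lt_mk_inter_preimage_singleton (hμ : ℵ₀ ≤ μ) (hP : #P < μ) (c : X → P) {C : Set X}
    (hC : #C = μ) {ν : Cardinal.{u}} (hν : ν < μ) : ∃ p, ν < #(C ∩ c ⁻¹' {p} : Set X) := by
  by_contra! hle
  refine (mk_iUnion_lt_of_forall_le hμ hP hν hle).not_ge (hC.symm.trans_le ?_)
  exact mk_le_mk_of_subset fun x hx => mem_iUnion.2 ⟨c x, hx, rfl⟩

/-- If all these intersections had size at most `ν`, a subset `T` of `C` of size `succ ν` could not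
lie in any of them, so that `C` would be the union of those given by the points of `T`. -/
theorem exists_lt_mk_inter_preimage_Iic (hμ : Order.IsSuccLimit μ) {Ω : Type*}
    [LinearOrder Ω] (a : X → Ω) {C : Set X} (hC : #C = μ) {ν : Cardinal.{u}} (hν : ν < μ) :
    ∃ x ∈ C, ν < #(C ∩ a ⁻¹' Iic (a x) : Set X) := by
  by_contra! hle
  have hsucc : Order.succ ν < μ := hμ.succ_lt hν
  obtain ⟨T, hTC, hT⟩ := le_mk_iff_exists_subset.1 (hsucc.le.trans hC.ge)
  have hcover : C ⊆ ⋃ t : T, C ∩ a ⁻¹' Iic (a t) := by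
    intro x hx
    by_contra hxT
    have hlt : ∀ t ∈ T, a t < a x := fun t ht => by
      by_contra! hxt
      exact hxT (mem_iUnion.2 ⟨⟨t, ht⟩, hx, hxt⟩)
    have hsub : T ⊆ C ∩ a ⁻¹' Iic (a x) := fun t ht => ⟨hTC ht, (hlt t ht).le⟩
    have hTν : #T ≤ ν := (mk_le_mk_of_subset hsub).trans (hle x hx)
    exact (Order.lt_succ ν).not_ge (hT.symm.trans_le hTν)
  have hsmall := mk_iUnion_lt_of_forall_le (aleph0_le_of_isSuccLimit hμ) (hT.trans_lt hsucc) hν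
    fun t : T => hle t (hTC t.2)
  exact hsmall.not_ge (hC.symm.trans_le (mk_le_mk_of_subset hcover))

end Unions

/-! ### Cofinal sequences -/

section Cofinal

variable {μ : Cardinal.{u}}

theorem isCofinal_of_le_mk {κ : Cardinal.{u}} {s : Set κ.ord.ToType} (hs : κ ≤ #s) :
    IsCofinal s := by
  by_contra h
  obtain ⟨j, hj⟩ := not_isCofinal_iff.1 h
  have hlt : #(Iio j) < κ := by simpa using mk_Iio_lt j (by simp)
  exact ((mk_le_mk_of_subset hj).trans_lt hlt).not_ge hs

theorem exists_strictMono_isCofinal_range (Ω : Type u) [LinearOrder Ω] [WellFoundedLT Ω] :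
    ∃ e : (Order.cof Ω).ord.ToType → Ω, StrictMono e ∧ IsCofinal (range e) := by
  obtain ⟨s, hs, hstype⟩ := Ordinal.exists_ord_cof_eq Ω
  obtain ⟨f⟩ := Ordinal.type_eq.1 ((Ordinal.type_toType _).trans hstype.symm)
  refine ⟨fun j => f j, fun j k hjk => f.map_rel_iff.2 hjk, fun α => ?_⟩
  obtain ⟨β, hβ, hαβ⟩ := hs α
  exact ⟨β, ⟨f.symm ⟨β, hβ⟩, by simp⟩, hαβ⟩

theorem mk_Iic_toType_ord_lt (hμ : ℵ₀ ≤ μ) (α : μ.ord.ToType) : #(Iic α) < μ := by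
  simpa using mk_Iic_lt α (by simp) (by simpa using hμ)

theorem exists_mk_preimage_singleton_lt (hμ : ℵ₀ ≤ μ) :
    ∃ r : μ.ord.ToType → μ.ord.cof.ord.ToType, ∀ j, #(r ⁻¹' {j}) < μ := by
  obtain ⟨e, -, he⟩ := Ordinal.cof_toType μ.ord ▸ exists_strictMono_isCofinal_range μ.ord.ToType
  have hbound : ∀ α, ∃ j, α ≤ e j := fun α => by simpa using he α
  choose r hr using hbound
  refine ⟨r, fun j => (mk_le_mk_of_subset ?_).trans_lt (mk_Iic_toType_ord_lt hμ (e j))⟩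
  rintro α rfl
  exact hr α

theorem exists_monotone_cardinal_cofinal (hμ : μ.IsSingular) :
    ∃ m : μ.ord.cof.ord.ToType → Cardinal.{u},
      Monotone m ∧ (∀ j, m j < μ) ∧ ∀ ν < μ, ∃ j, ν < m j := by
  obtain ⟨e, hmono, he⟩ := Ordinal.cof_toType μ.ord ▸ exists_strictMono_isCofinal_range μ.ord.ToType
  refine ⟨fun j => #(Iic (e j)), fun j k hjk =>
    mk_le_mk_of_subset (Iic_subset_Iic.2 (hmono.monotone hjk)),
    fun j => mk_Iic_toType_ord_lt hμ.aleph0_le _, fun ν hν => ?_⟩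
  by_contra! hle
  have hsmall := mk_iUnion_lt_of_forall_le hμ.aleph0_le
    ((mk_ord_toType _).trans_lt hμ.cof_ord_lt) hν hle
  have huniv : ⋃ j, Iic (e j) = Set.univ := eq_univ_of_forall fun α => by
    obtain ⟨_, ⟨j, rfl⟩, hj⟩ := he α
    exact mem_iUnion.2 ⟨j, hj⟩
  rw [huniv, mk_univ, mk_ord_toType] at hsmall
  exact hsmall.false

end Cofinal

/-! ### Maximal almost disjoint families relative to a class of sets -/

section Mad

variable {X P : Type u} {μ : Cardinal.{u}} {Y : Set X} {𝒩 𝒪 𝒮 : Set (Set X)}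

/-- The sets of size `μ` that are `μ`-almost disjoint from every member of `𝒩`. -/
def orthogonal (μ : Cardinal.{u}) (𝒩 : Set (Set X)) : Set (Set X) :=
  {A | #A = μ ∧ ∀ N ∈ 𝒩, #(A ∩ N : Set X) < μ}

/-- `𝒮` is a maximal `μ`-almost disjoint subfamily of `𝒪`. Maximality is stated as: every member of
`𝒪` has an intersection of size at least `μ` with some member of `𝒮`. The notion allows mad families
to be built separately on parts of the ground set, `𝒪` consisting of the sets to be dealt with on
each part. -/
structure IsMadIn (μ : Cardinal.{u}) (𝒪 𝒮 : Set (Set X)) : Prop where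
  subset : 𝒮 ⊆ 𝒪
  pairwise : 𝒮.Pairwise fun A B => #(A ∩ B : Set X) < μ
  exists_le_mk_inter : ∀ C ∈ 𝒪, ∃ A ∈ 𝒮, μ ≤ #(A ∩ C : Set X)

theorem exists_isMadIn (h𝒪 : ∀ A ∈ 𝒪, #A = μ) : ∃ 𝒮, IsMadIn μ 𝒪 𝒮 := by
  obtain ⟨𝒮, h𝒮⟩ := zorn_subset
    {𝒮 | 𝒮 ⊆ 𝒪 ∧ 𝒮.Pairwise fun A B => #(A ∩ B : Set X) < μ} fun c hc hchain =>
      ⟨⋃₀ c, ⟨sUnion_subset fun s hs => (hc hs).1,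
        (pairwise_sUnion hchain.directedOn).2 fun s hs => (hc hs).2⟩,
        fun s hs => subset_sUnion_of_mem hs⟩
  refine ⟨𝒮, h𝒮.prop.1, h𝒮.prop.2, fun C hC => ?_⟩
  by_contra! hlt
  have hmem : C ∈ 𝒮 := by
    refine h𝒮.le_of_ge ⟨insert_subset hC h𝒮.prop.1, ?_⟩ (subset_insert C 𝒮) (mem_insert C 𝒮)
    exact pairwise_insert.2
      ⟨h𝒮.prop.2, fun A hA _ => ⟨(inter_comm C A).symm ▸ hlt A hA, hlt A hA⟩⟩
  exact (hlt C hmem).ne (by rw [inter_self, h𝒪 C hC])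

theorem IsMadIn.isMadFamily (hX : #X = μ) (h : IsMadIn μ {A | #A = μ} 𝒮) : IsMadFamily μ 𝒮 := by
  obtain ⟨A₀, hA₀, -⟩ := h.exists_le_mk_inter univ (mk_univ.trans hX)
  have hunion : #(⋃₀ 𝒮) = μ :=
    ((mk_set_le _).trans hX.le).antisymm
      ((h.subset hA₀).symm.trans_le (mk_le_mk_of_subset (subset_sUnion_of_mem hA₀)))
  refine ⟨⟨hunion, h.subset, fun A hA B hB => h.pairwise hA hB⟩, ?_⟩
  rintro ⟨C, -, hC𝒮, -, hcard, hAD⟩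
  obtain ⟨A, hA, hle⟩ := h.exists_le_mk_inter C (hcard C (mem_insert C 𝒮))
  exact (hAD A (mem_insert_of_mem C hA) C (mem_insert C 𝒮) fun hAC => hC𝒮 (hAC ▸ hA)).not_ge hle

/-- `G` consists of indices `g j` of fibers with at least `m j` points of `C`, for a sequence `m`
cofinal in `μ`. -/
theorem exists_mk_eq_cof_forall_le_mk_inter_preimage (hμ : μ.IsSingular) (hP : #P < μ) {c : X → P}
    {C : Set X} (hC : #C = μ) (hfib : ∀ p, #(C ∩ c ⁻¹' {p} : Set X) < μ) :
    ∃ G : Set P, #G = μ.ord.cof ∧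
      ∀ H ⊆ G, μ.ord.cof ≤ #H → μ ≤ #(C ∩ c ⁻¹' H : Set X) := by
  obtain ⟨m, hmono, hmμ, hm⟩ := exists_monotone_cardinal_cofinal hμ
  choose g hg using fun j =>
    exists_lt_mk_inter_preimage_singleton hμ.aleph0_le hP c hC (hmμ j)
  have hmem : ∀ {j H}, g j ∈ H → m j < #(C ∩ c ⁻¹' H : Set X) := fun {j H} hj =>
    (hg j).trans_le (mk_le_mk_of_subset
      (inter_subset_inter_right C (preimage_mono (singleton_subset_iff.2 hj))))
  refine ⟨range g, (mk_range_le.trans_eq (mk_ord_toType _)).antisymm ?_, fun H hHG hH => ?_⟩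
  · by_contra! hlt
    obtain ⟨j, hj⟩ := hm _ (mk_inter_preimage_lt_of_lt_cof hμ.aleph0_le hfib hlt)
    exact (hj.trans (hmem (mem_range_self j))).false
  · have hcof : IsCofinal (g ⁻¹' H) :=
      isCofinal_of_le_mk (hH.trans (mk_preimage_of_subset_range g H hHG))
    by_contra! hlt
    obtain ⟨j, hj⟩ := hm _ hlt
    obtain ⟨k, hk, hjk⟩ := hcof j
    exact (hj.trans_le (hmono hjk)).not_gt (hmem hk)

theorem IsMadIn.inter_preimage (hμ : μ.IsSingular) (hX : #X ≤ μ) (hP : #P < μ) {c : X → P}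
    (hfib : ∀ p, #(Y ∩ c ⁻¹' {p} : Set X) < μ)
    (hsat : ∀ N ∈ 𝒩, ∃ N' ∈ 𝒩, Y ∩ c ⁻¹' (c '' (Y ∩ N)) ⊆ N') {ℬ : Set (Set P)}
    (hℬ : IsMadIn μ.ord.cof (orthogonal μ.ord.cof ((fun N => c '' (Y ∩ N)) '' 𝒩)) ℬ) :
    IsMadIn μ (orthogonal μ 𝒩 ∩ 𝒫 Y) {A ∈ (fun B => Y ∩ c ⁻¹' B) '' ℬ | #A = μ} := by
  have hsmall : ∀ {T : Set P}, #T < μ.ord.cof → #(Y ∩ c ⁻¹' T : Set X) < μ :=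
    mk_inter_preimage_lt_of_lt_cof hμ.aleph0_le hfib
  refine ⟨?_, ?_, ?_⟩
  · rintro _ ⟨⟨B, hB, rfl⟩, hcard⟩
    refine ⟨⟨hcard, fun N hN => ?_⟩, inter_subset_left⟩
    refine (mk_le_mk_of_subset ?_).trans_lt (hsmall ((hℬ.subset hB).2 _ (mem_image_of_mem _ hN)))
    rintro x ⟨⟨hxY, hxB⟩, hxN⟩
    exact ⟨hxY, hxB, mem_image_of_mem c ⟨hxY, hxN⟩⟩
  · rintro _ ⟨⟨B, hB, rfl⟩, -⟩ _ ⟨⟨B', hB', rfl⟩, -⟩ hne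
    dsimp only
    rw [← inter_inter_distrib_left, ← preimage_inter]
    exact hsmall (hℬ.pairwise hB hB' fun h => hne (h ▸ rfl))
  · rintro C ⟨⟨hCμ, hC𝒩⟩, hCY⟩
    obtain ⟨G, hGκ, hG⟩ := exists_mk_eq_cof_forall_le_mk_inter_preimage hμ hP hCμ fun p =>
      (mk_le_mk_of_subset (inter_subset_inter_left _ hCY)).trans_lt (hfib p)
    have hGorth : G ∈ orthogonal μ.ord.cof ((fun N => c '' (Y ∩ N)) '' 𝒩) := by
      refine ⟨hGκ, forall_mem_image.2 fun N hN => ?_⟩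
      obtain ⟨N', hN', hNN'⟩ := hsat N hN
      by_contra! hle
      refine (hC𝒩 N' hN').not_ge ((hG _ inter_subset_left hle).trans (mk_le_mk_of_subset ?_))
      exact fun x hx => ⟨hx.1, hNN' ⟨hCY hx.1, hx.2.2⟩⟩
    obtain ⟨B, hB, hBG⟩ := hℬ.exists_le_mk_inter G hGorth
    have hmeet : μ ≤ #(Y ∩ c ⁻¹' B ∩ C : Set X) :=
      (hG _ inter_subset_right hBG).trans
        (mk_le_mk_of_subset fun x hx => ⟨⟨hCY hx.1, hx.2.1⟩, hx.1⟩)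
    exact ⟨_, ⟨mem_image_of_mem _ hB, ((mk_set_le _).trans hX).antisymm
      (hmeet.trans (mk_le_mk_of_subset inter_subset_left))⟩, hmeet⟩

end Mad

/-! ### Initial segments of columns -/

section Columns

variable {X Ω : Type u} {μ : Cardinal.{u}} {a : X → Ω}

/-- The columns (the fibers of `a`) together with, for every `d`, the members of `𝒮 d`. -/
def columnsUnion (a : X → Ω) (𝒮 : Ω → Set (Set X)) : Set (Set X) :=
  range (fun α => a ⁻¹' {α}) ∪ ⋃ d, 𝒮 d

theorem mk_columnsUnion (hμ : ℵ₀ ≤ μ) (hΩ : #Ω = μ) (ha : Function.Surjective a)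
    {𝒮 : Ω → Set (Set X)} (h𝒮 : ∀ d, #(𝒮 d) ≤ μ) : #(columnsUnion a 𝒮) = μ := by
  have hrange : #(range fun α => a ⁻¹' {α}) = μ :=
    (mk_range_eq _ (ha.preimage_injective.comp singleton_injective)).trans hΩ
  refine le_antisymm ?_ (hrange.symm.trans_le (mk_le_mk_of_subset subset_union_left))
  refine (mk_union_le _ _).trans (add_le_of_le hμ hrange.le ((mk_iUnion_le 𝒮).trans ?_))
  exact mul_le_of_le hμ hΩ.le (ciSup_le' h𝒮)

variable [LinearOrder Ω] {d : Ω}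

/-- The sets of size `μ` that live on the columns before `d` (the columns being the fibers of `a`),
but have fewer than `μ` points in the columns up to any `β < d`. -/
def limitSets (μ : Cardinal.{u}) (a : X → Ω) (d : Ω) : Set (Set X) :=
  orthogonal μ ((fun β => a ⁻¹' Iic β) '' Iio d) ∩ 𝒫 (a ⁻¹' Iio d)

theorem mk_inter_preimage_Iic_lt_of_mem_limitSets {A : Set X} (hA : A ∈ limitSets μ a d) {β : Ω}
    (hβ : β < d) : #(A ∩ a ⁻¹' Iic β : Set X) < μ :=
  hA.1.2 _ (mem_image_of_mem _ hβ)

/-- `i α` is the first term of a sequence cofinal in `μ` that bounds the number of points of `C` in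
the columns up to `α`. -/
theorem exists_limit_presentation (hμ : μ.IsSingular) {C : Set X} (hC : C ∈ limitSets μ a d) :
    ∃ i : Ω → μ.ord.cof.ord.ToType,
      MonotoneOn i (Iio d) ∧ ∀ j, ∃ β < d, ∀ α < d, i α ≤ j → α ≤ β := by
  obtain ⟨m, hmono, hmμ, hm⟩ := exists_monotone_cardinal_cofinal hμ
  have : Nonempty μ.ord.cof.ord.ToType := ⟨(hm 0 hμ.pos).choose⟩
  let count : Ω → Cardinal.{u} := fun α => #(C ∩ a ⁻¹' Iic α : Set X)
  have hcount : Monotone count := fun α β h =>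
    mk_le_mk_of_subset (inter_subset_inter_right C (preimage_mono (Iic_subset_Iic.2 h)))
  have hleast : ∀ α < d, ∃ j, IsLeast {j | count α ≤ m j} j := fun α hα => by
    obtain ⟨j, hj⟩ := hm _ (mk_inter_preimage_Iic_lt_of_mem_limitSets hC hα)
    exact ⟨_, wellFounded_lt.min_mem _ ⟨j, hj.le⟩, fun k hk => wellFounded_lt.min_le hk⟩
  choose! i hi using hleast
  refine ⟨i, fun α hα β hβ h => (hi α hα).2 ((hcount h).trans (hi β hβ).1), fun j => ?_⟩
  obtain ⟨x, hxC, hx⟩ := exists_lt_mk_inter_preimage_Iic hμ.isSuccLimit a hC.1.1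
    (hmμ j)
  refine ⟨a x, hC.2 hxC, fun α hα hαj => ?_⟩
  by_contra! hlt
  exact (hx.trans_le (hcount hlt.le)).not_ge ((hi α hα).1.trans (hmono hαj))

theorem exists_isMadIn_limitSets (hμ : μ.IsSingular) (hX : #X ≤ μ) {R : Type u} (hR : #R < μ)
    {ρ : X → R} (hρ : ∀ β < d, ∀ r, #(a ⁻¹' Iic β ∩ ρ ⁻¹' {r} : Set X) < μ) :
    ∃ 𝒮, IsMadIn μ (limitSets μ a d) 𝒮 ∧ #𝒮 ≤ 2 ^ (μ.ord.cof * #R) := by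
  rcases (limitSets μ a d).eq_empty_or_nonempty with hempty | ⟨C, hC⟩
  · exact ⟨∅, ⟨empty_subset _, pairwise_empty _, by simp [hempty]⟩, by simp⟩
  obtain ⟨i, hmono, hi⟩ := exists_limit_presentation hμ hC
  let c : X → μ.ord.cof.ord.ToType × R := fun x => (i (a x), ρ x)
  have hP : #(μ.ord.cof.ord.ToType × R) = μ.ord.cof * #R := by simp
  have hfib : ∀ p, #(a ⁻¹' Iio d ∩ c ⁻¹' {p} : Set X) < μ := by
    intro p
    obtain ⟨β, hβd, hβ⟩ := hi p.1
    refine (mk_le_mk_of_subset ?_).trans_lt (hρ β hβd p.2)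
    rintro x ⟨hxd, rfl⟩
    exact ⟨hβ _ hxd le_rfl, rfl⟩
  have hsat : ∀ N ∈ (fun β => a ⁻¹' Iic β) '' Iio d, ∃ N' ∈ (fun β => a ⁻¹' Iic β) '' Iio d,
      a ⁻¹' Iio d ∩ c ⁻¹' (c '' (a ⁻¹' Iio d ∩ N)) ⊆ N' := by
    rintro _ ⟨β, hβ, rfl⟩
    obtain ⟨γ, hγd, hγ⟩ := hi (i β)
    refine ⟨_, mem_image_of_mem _ hγd, ?_⟩
    rintro x ⟨hxd, y, ⟨hyd, hyβ⟩, hyx⟩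
    exact hγ _ hxd ((congrArg Prod.fst hyx).symm.trans_le (hmono hyd hβ hyβ))
  obtain ⟨ℬ, hℬ⟩ := exists_isMadIn (μ := μ.ord.cof) (𝒪 := orthogonal μ.ord.cof
    ((fun N => c '' (a ⁻¹' Iio d ∩ N)) '' ((fun β => a ⁻¹' Iic β) '' Iio d))) fun _ hB => hB.1
  refine ⟨_, hℬ.inter_preimage hμ hX (hP.trans_lt (mul_lt_of_lt hμ.aleph0_le hμ.cof_ord_lt hR))
    hfib hsat, ?_⟩
  calc #{A ∈ (fun B => a ⁻¹' Iio d ∩ c ⁻¹' B) '' ℬ | #A = μ}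
      ≤ #((fun B => a ⁻¹' Iio d ∩ c ⁻¹' B) '' ℬ) := mk_le_mk_of_subset (sep_subset _ _)
    _ ≤ #ℬ := mk_image_le
    _ ≤ #(Set (μ.ord.cof.ord.ToType × R)) := mk_set_le ℬ
    _ = 2 ^ (μ.ord.cof * #R) := by rw [mk_set, hP]

theorem mk_inter_lt_of_mem_limitSets_of_lt {A B : Set X} {d' : Ω} (hA : A ∈ limitSets μ a d)
    (hB : B ⊆ a ⁻¹' Iic d') (h : d' < d) : #(A ∩ B : Set X) < μ :=
  (mk_le_mk_of_subset (inter_subset_inter_right A hB)).trans_lt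
    (mk_inter_preimage_Iic_lt_of_mem_limitSets hA h)

theorem exists_inter_mem_limitSets [OrderTop Ω] [WellFoundedLT Ω] (hμ : ℵ₀ ≤ μ) {C : Set X}
    (hC : #C = μ) (hcol : ∀ α, #(C ∩ a ⁻¹' {α} : Set X) < μ) :
    ∃ d, C ∩ a ⁻¹' Iio d ∈ limitSets μ a d := by
  have hIic : ∀ β, #(C ∩ a ⁻¹' Iio β : Set X) < μ → #(C ∩ a ⁻¹' Iic β : Set X) < μ := by
    intro β hβ
    rw [← Iio_union_right, preimage_union, inter_union_distrib_left]
    exact (mk_union_le _ _).trans_lt (add_lt_of_lt hμ hβ (hcol β))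
  have htop : μ ≤ #(C ∩ a ⁻¹' Iio ⊤ : Set X) := by
    by_contra! hlt
    simpa [hC] using hIic ⊤ hlt
  obtain ⟨d, hd, hmin⟩ := wellFounded_lt.has_min {d | μ ≤ #(C ∩ a ⁻¹' Iio d : Set X)} ⟨⊤, htop⟩
  refine ⟨d, ⟨((mk_le_mk_of_subset inter_subset_left).trans hC.le).antisymm hd,
    forall_mem_image.2 fun β hβ => ?_⟩, inter_subset_right⟩
  exact (mk_le_mk_of_subset (inter_subset_inter_left _ inter_subset_left)).trans_lt
    (hIic β (not_le.1 fun h => hmin β h hβ))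

theorem pairwise_columnsUnion (hμ : 0 < μ) {𝒮 : Ω → Set (Set X)}
    (h𝒮 : ∀ d, IsMadIn μ (limitSets μ a d) (𝒮 d)) :
    (columnsUnion a 𝒮).Pairwise fun A B => #(A ∩ B : Set X) < μ := by
  have hcol : ∀ α d, ∀ A ∈ 𝒮 d, #(A ∩ a ⁻¹' {α} : Set X) < μ := by
    intro α d A hA
    rcases lt_or_ge α d with h | h
    · exact mk_inter_lt_of_mem_limitSets_of_lt ((h𝒮 d).subset hA)
        (fun x hx => (mem_singleton_iff.1 hx).le) h
    · have hdisj : A ∩ a ⁻¹' {α} = ∅ := by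
        refine eq_empty_of_forall_notMem ?_
        rintro x ⟨hxA, rfl⟩
        exact h.not_gt (((h𝒮 d).subset hA).2 hxA)
      simpa [hdisj] using hμ
  have hlt : ∀ d d', d' < d → ∀ A ∈ 𝒮 d, ∀ B ∈ 𝒮 d', #(A ∩ B : Set X) < μ :=
    fun d d' h A hA B hB => mk_inter_lt_of_mem_limitSets_of_lt ((h𝒮 d).subset hA)
      (((h𝒮 d').subset hB).2.trans (preimage_mono Iio_subset_Iic_self)) h
  rintro A (⟨α, rfl⟩ | hA) B (⟨β, rfl⟩ | hB) hne
  · have hdisj : a ⁻¹' {α} ∩ a ⁻¹' {β} = ∅ := by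
      refine eq_empty_of_forall_notMem ?_
      rintro x ⟨rfl, rfl⟩
      exact hne rfl
    simpa [hdisj] using hμ
  · obtain ⟨d, hB⟩ := mem_iUnion.1 hB
    exact (inter_comm _ B).symm ▸ hcol α d B hB
  · obtain ⟨d, hA⟩ := mem_iUnion.1 hA
    exact hcol β d A hA
  · obtain ⟨d, hA⟩ := mem_iUnion.1 hA
    obtain ⟨d', hB⟩ := mem_iUnion.1 hB
    rcases lt_trichotomy d d' with h | rfl | h
    · exact (inter_comm A B).symm ▸ hlt d' d h B hB A hA
    · exact (h𝒮 d).pairwise hA hB hne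
    · exact hlt d d' h A hA B hB

theorem isMadIn_columnsUnion [OrderTop Ω] [WellFoundedLT Ω] (hμ : ℵ₀ ≤ μ)
    (hcol : ∀ α, #(a ⁻¹' {α}) = μ) {𝒮 : Ω → Set (Set X)}
    (h𝒮 : ∀ d, IsMadIn μ (limitSets μ a d) (𝒮 d)) :
    IsMadIn μ {A | #A = μ} (columnsUnion a 𝒮) := by
  refine ⟨union_subset (range_subset_iff.2 hcol) (iUnion_subset fun d A hA =>
    ((h𝒮 d).subset hA).1.1), pairwise_columnsUnion (aleph0_pos.trans_le hμ) h𝒮, fun C hC => ?_⟩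
  by_contra! hlt
  obtain ⟨d, hd⟩ := exists_inter_mem_limitSets (a := a) hμ hC fun α => by
    simpa only [inter_comm C] using hlt _ (Or.inl (mem_range_self α))
  obtain ⟨A, hA, hle⟩ := (h𝒮 d).exists_le_mk_inter _ hd
  exact (hlt A (Or.inr (mem_iUnion.2 ⟨d, hA⟩))).not_ge
    (hle.trans (mk_le_mk_of_subset (inter_subset_inter_right A inter_subset_left)))

end Columns

theorem mk_withTop_toType_ord {μ : Cardinal.{u}} (hμ : ℵ₀ ≤ μ) :
    #(WithTop μ.ord.ToType) = μ := by
  rw [WithTop, mk_option, mk_ord_toType, add_one_eq hμ]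

theorem exists_columns {X : Type u} {μ : Cardinal.{u}} (hμ : ℵ₀ ≤ μ) (hX : #X = μ) :
    ∃ (a : X → WithTop μ.ord.ToType) (ρ : X → μ.ord.cof.ord.ToType),
      (∀ α, #(a ⁻¹' {α}) = μ) ∧ ∀ β < ⊤, ∀ j, #(a ⁻¹' Iic β ∩ ρ ⁻¹' {j} : Set X) < μ := by
  obtain ⟨f⟩ : Nonempty (X ≃ WithTop μ.ord.ToType × μ.ord.ToType) := Cardinal.eq.1 <| by
    simp only [mk_prod, lift_id, mk_withTop_toType_ord hμ, mk_ord_toType, mul_eq_self hμ, hX]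
  obtain ⟨r, hr⟩ := exists_mk_preimage_singleton_lt hμ
  refine ⟨fun x => (f x).1, fun x => r (f x).2, fun α => ?_, fun β hβ j => ?_⟩
  · calc #((fun x => (f x).1) ⁻¹' {α}) = #(f ⁻¹' ({α} ×ˢ Set.univ)) := by
          rw [prod_univ]; rfl
      _ = μ := by simp [mk_preimage_equiv, mk_setProd]
  · lift β to μ.ord.ToType using hβ.ne
    have hIic : #(Iic (β : WithTop μ.ord.ToType)) < μ := by
      rw [← WithTop.image_coe_Iic]
      exact mk_image_le.trans_lt (mk_Iic_toType_ord_lt hμ β)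
    calc #((fun x => (f x).1) ⁻¹' Iic ↑β ∩ (fun x => r (f x).2) ⁻¹' {j} : Set X)
        = #(f ⁻¹' (Iic ↑β ×ˢ (r ⁻¹' {j}))) := rfl
      _ = #(Iic (β : WithTop μ.ord.ToType)) * #(r ⁻¹' {j}) := by
          simp [mk_preimage_equiv, mk_setProd]
      _ < μ := mul_lt_of_lt hμ hIic (hr j)

/-- For a singular cardinal μ, if 2^{cf μ} < μ then μ ∈ MAD(μ). -/
theorem stmt14 (μ : Cardinal.{u}) (hμ : ℵ₀ ≤ μ) (hsing : μ.ord.cof < μ)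
    (h : 2 ^ μ.ord.cof < μ) : μ ∈ MADSet μ := by
  have hsingular : μ.IsSingular := ⟨hμ, hsing.ne⟩
  have hcof : ℵ₀ ≤ μ.ord.cof := Ordinal.aleph0_le_cof_iff.2 <|
    Ordinal.one_lt_cof_iff.2 (isSuccLimit_ord hμ)
  obtain ⟨a, ρ, hcol, hρ⟩ := exists_columns hμ (mk_out μ)
  have ha : Function.Surjective a := fun α => by
    have hne : (a ⁻¹' {α}).Nonempty := by
      rw [← nonempty_coe_sort, ← mk_ne_zero_iff, hcol]
      exact hsingular.pos.ne'
    exact hne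
  choose 𝒮 h𝒮 hcard using fun d => exists_isMadIn_limitSets hsingular (mk_out μ).le
    ((mk_ord_toType μ.ord.cof).trans_lt hsing)
    fun β hβ => hρ β (lt_of_lt_of_le hβ (le_top (a := d)))
  have hcard_le : ∀ d, #(𝒮 d) ≤ μ := fun d =>
    (hcard d).trans (by simpa only [mk_ord_toType, mul_eq_self hcof] using h.le)
  have hcardinality : #(columnsUnion a 𝒮) = μ :=
    mk_columnsUnion hμ (mk_withTop_toType_ord hμ) ha hcard_le
  exact ⟨columnsUnion a 𝒮, (isMadIn_columnsUnion hμ hcol h𝒮).isMadFamily (mk_out μ),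
    (Ordinal.cof_ord_le μ).trans hcardinality.ge, hcardinality⟩
end
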